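/- For real parameters θ¹, θ² with θ¹+θ² > 0 and θ¹−θ² > 0, the covariance of log(sech X) and X under the beta-logistic distribution is ∫_{ℝ} (log(sech x) − m)·(x − μ) · p(x;θ¹,θ²) dx = (1/4)·(ψ'((θ¹+θ²)/2) − ψ'((θ¹−θ²)/2)), where μ = (1/2)(ψ((θ¹+θ²)/2) − ψ((θ¹−θ²)/2)) and m = (1/2)ψ((θ¹−θ²)/2) + (1/2)ψ((θ¹+θ²)/2) − ψ(θ¹) + log 2. This is the off-diagonal entry g₁₂ of the Fisher information matrix of the family. -/

import Mathlib

open MeasureTheory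

/-- The hyperbolic secant function: `sech x = 2 / (eˣ + e⁻ˣ)`. -/
noncomputable def sech (x : ℝ) : ℝ := 1 / Real.cosh x

/-- The beta-logistic density. -/
noncomputable def betaLogisticPDF (θ1 θ2 x : ℝ) : ℝ :=
  (2 : ℝ) ^ (1 - θ1) * sech x ^ θ1 * Real.exp (θ2 * x) /
    (Real.Gamma ((θ1 - θ2) / 2) * Real.Gamma ((θ1 + θ2) / 2) / Real.Gamma θ1)

/-- The digamma function `ψ(z) = d/dz log Γ(z)`. -/
noncomputable def digamma (z : ℝ) : ℝ := deriv (fun x => Real.log (Real.Gamma x)) z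

/-- The trigamma function `ψ'(z) = d²/dz² log Γ(z)`. -/
noncomputable def trigamma (z : ℝ) : ℝ := iteratedDeriv 2 (fun x => Real.log (Real.Gamma x)) z

/-!
If `X` is beta-logistic then `Y = sigmoid (2 * X)` has the beta distribution with parameters
`a = (θ1 + θ2) / 2` and `b = (θ1 - θ2) / 2`, while
`log (sech X) = (log Y + log (1 - Y)) / 2 + log 2` and `X = (log Y - log (1 - Y)) / 2`.
Polarization turns the covariance into `(Var[log Y] - Var[log (1 - Y)]) / 4`. The moment generating
function of `log Y` at `u` is `B(a + u, b) / B(a, b)`, so its mean and variance are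
`ψ(a) - ψ(a + b)` and `ψ'(a) - ψ'(a + b)`; those of `log (1 - Y)` follow from the symmetry
`Y ↦ 1 - Y`, which exchanges `a` and `b`.
-/

open Set Filter Topology ProbabilityTheory

section Moments

variable {Ω : Type*} {mΩ : MeasurableSpace Ω} {P : Measure Ω} {X Y : Ω → ℝ}

lemma covariance_add_sub [IsFiniteMeasure P] (hX : MemLp X 2 P) (hY : MemLp Y 2 P) :
    cov[X + Y, X - Y; P] = Var[X; P] - Var[Y; P] := by
  rw [covariance_add_left hX hY (hX.sub hY), covariance_sub_right hX hX hY,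
    covariance_sub_right hY hX hY, covariance_self hX.aemeasurable, covariance_self hY.aemeasurable,
    covariance_comm Y X]
  ring

lemma iteratedDeriv_two_cgf_zero [IsProbabilityMeasure P]
    (h : 0 ∈ interior (integrableExpSet X P)) : iteratedDeriv 2 (cgf X P) 0 = Var[X; P] := by
  simpa using (variance_tilted_mul h).symm

end Moments

section LogGamma

lemma analyticAt_log_Gamma {z : ℝ} (hz : 0 < z) :
    AnalyticAt ℝ (fun x => Real.log (Real.Gamma x)) z := by
  have hGamma : AnalyticAt ℂ Complex.Gamma z := by
    refine DifferentiableOn.analyticAt (s := {w : ℂ | 0 < w.re}) (fun w hw => ?_)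
      ((isOpen_lt continuous_const Complex.continuous_re).mem_nhds (by simpa using hz))
    refine (Complex.differentiableAt_Gamma w fun n hn => ?_).differentiableWithinAt
    have hw' : 0 < w.re := hw
    rw [hn, Complex.neg_re, Complex.natCast_re] at hw'
    linarith [n.cast_nonneg (α := ℝ)]
  exact hGamma.re_ofReal.log (Real.Gamma_pos_of_pos hz)

lemma hasDerivAt_log_Gamma {z : ℝ} (hz : 0 < z) :
    HasDerivAt (fun x => Real.log (Real.Gamma x)) (digamma z) z :=
  (analyticAt_log_Gamma hz).differentiableAt.hasDerivAt

end LogGamma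

section BetaDistribution

variable {a b u : ℝ}

lemma betaPDFReal_nonneg (ha : 0 < a) (hb : 0 < b) (y : ℝ) : 0 ≤ betaPDFReal a b y := by
  by_cases hy : 0 < y ∧ y < 1
  · exact (betaPDFReal_pos hy.1 hy.2 ha hb).le
  · rw [betaPDFReal, if_neg hy]

lemma integrable_betaPDFReal (ha : 0 < a) (hb : 0 < b) : Integrable (betaPDFReal a b) := by
  refine ⟨by fun_prop, ?_⟩
  rw [hasFiniteIntegral_iff_ofReal (.of_forall (betaPDFReal_nonneg ha hb))]
  exact (lintegral_betaPDF_eq_one ha hb).trans_lt ENNReal.one_lt_top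

lemma integral_betaPDFReal (ha : 0 < a) (hb : 0 < b) : ∫ y, betaPDFReal a b y = 1 := by
  rw [integral_eq_lintegral_of_nonneg_ae (.of_forall (betaPDFReal_nonneg ha hb)) (by fun_prop)]
  exact (ENNReal.toReal_eq_one_iff _).2 (lintegral_betaPDF_eq_one ha hb)

lemma measurable_betaPDF (a b : ℝ) : Measurable (betaPDF a b) :=
  (measurable_betaPDFReal a b).ennreal_ofReal

lemma integral_betaMeasure {E : Type*} [NormedAddCommGroup E] [NormedSpace ℝ E]
    (ha : 0 < a) (hb : 0 < b) (g : ℝ → E) :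
    ∫ y, g y ∂betaMeasure a b = ∫ y, betaPDFReal a b y • g y := by
  rw [betaMeasure, integral_withDensity_eq_integral_toReal_smul (measurable_betaPDF a b)
    (.of_forall fun _ => ENNReal.ofReal_lt_top)]
  simp only [betaPDF, ENNReal.toReal_ofReal (betaPDFReal_nonneg ha hb _)]

lemma integrable_betaMeasure_iff {E : Type*} [NormedAddCommGroup E] [NormedSpace ℝ E]
    (ha : 0 < a) (hb : 0 < b) {g : ℝ → E} :
    Integrable g (betaMeasure a b) ↔ Integrable (fun y => betaPDFReal a b y • g y) := by
  rw [betaMeasure, integrable_withDensity_iff_integrable_smul' (measurable_betaPDF a b)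
    (.of_forall fun _ => ENNReal.ofReal_lt_top)]
  simp only [betaPDF, ENNReal.toReal_ofReal (betaPDFReal_nonneg ha hb _)]

lemma betaPDFReal_one_sub (a b y : ℝ) : betaPDFReal a b (1 - y) = betaPDFReal b a y := by
  have hy : 0 < 1 - y ∧ 1 - y < 1 ↔ 0 < y ∧ y < 1 := by
    constructor <;> rintro ⟨h0, h1⟩ <;> constructor <;> linarith
  simp only [betaPDFReal, beta, hy, sub_sub_cancel, add_comm a b,
    mul_comm (Real.Gamma a), mul_right_comm _ ((1 - y) ^ (a - 1))]

lemma measurePreserving_one_sub_betaMeasure (a b : ℝ) :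
    MeasurePreserving (fun y => 1 - y) (betaMeasure a b) (betaMeasure b a) := by
  refine ⟨by fun_prop, Measure.ext fun s hs => ?_⟩
  rw [Measure.map_apply (by fun_prop) hs, betaMeasure, betaMeasure, withDensity_apply _ hs,
    withDensity_apply _ (hs.preimage (by fun_prop)),
    ← (volume.measurePreserving_sub_left (1 : ℝ)).setLIntegral_comp_preimage hs
      (measurable_betaPDF b a)]
  simp only [betaPDF, betaPDFReal_one_sub]

lemma betaPDFReal_mul_exp_log (ha : 0 < a + u) (hb : 0 < b) (y : ℝ) :
    betaPDFReal a b y * Real.exp (u * Real.log y) =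
      beta (a + u) b / beta a b * betaPDFReal (a + u) b y := by
  by_cases hy : 0 < y ∧ y < 1
  · have hB := (beta_pos ha hb).ne'
    rw [betaPDFReal, betaPDFReal, if_pos hy, if_pos hy, mul_comm u, ← Real.rpow_def_of_pos hy.1,
      add_sub_right_comm, Real.rpow_add hy.1]
    field_simp
  · simp only [betaPDFReal, if_neg hy, zero_mul, mul_zero]

lemma integrable_exp_mul_log_betaMeasure (ha : 0 < a) (hb : 0 < b) (hu : 0 < a + u) :
    Integrable (fun y => Real.exp (u * Real.log y)) (betaMeasure a b) := by
  simp only [integrable_betaMeasure_iff ha hb, smul_eq_mul, betaPDFReal_mul_exp_log hu hb]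
  exact (integrable_betaPDFReal hu hb).const_mul _

lemma mgf_log_betaMeasure (ha : 0 < a) (hb : 0 < b) (hu : 0 < a + u) :
    mgf Real.log (betaMeasure a b) u = beta (a + u) b / beta a b := by
  simp only [mgf, integral_betaMeasure ha hb, smul_eq_mul, betaPDFReal_mul_exp_log hu hb]
  rw [integral_const_mul, integral_betaPDFReal hu hb, mul_one]

lemma log_beta (ha : 0 < a) (hb : 0 < b) :
    Real.log (beta a b) =
      Real.log (Real.Gamma a) + Real.log (Real.Gamma b) - Real.log (Real.Gamma (a + b)) := by
  have hΓa := (Real.Gamma_pos_of_pos ha).ne'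
  have hΓb := (Real.Gamma_pos_of_pos hb).ne'
  have hΓab := (Real.Gamma_pos_of_pos (add_pos ha hb)).ne'
  rw [beta, Real.log_div (mul_ne_zero hΓa hΓb) hΓab, Real.log_mul hΓa hΓb]

lemma cgf_log_betaMeasure (ha : 0 < a) (hb : 0 < b) (hu : 0 < a + u) :
    cgf Real.log (betaMeasure a b) u =
      Real.log (Real.Gamma (a + b)) - Real.log (Real.Gamma a) +
        (Real.log (Real.Gamma (a + u)) - Real.log (Real.Gamma (a + b + u))) := by
  rw [cgf, mgf_log_betaMeasure ha hb hu,
    Real.log_div (beta_pos hu hb).ne' (beta_pos ha hb).ne', log_beta hu hb, log_beta ha hb,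
    add_right_comm]
  ring

lemma zero_mem_interior_integrableExpSet_log_betaMeasure (ha : 0 < a) (hb : 0 < b) :
    0 ∈ interior (integrableExpSet Real.log (betaMeasure a b)) :=
  mem_interior_iff_mem_nhds.2 <| (eventually_gt_nhds (neg_lt_zero.2 ha)).mono fun _ hu =>
    integrable_exp_mul_log_betaMeasure ha hb (neg_lt_iff_pos_add'.1 hu)

lemma cgf_log_betaMeasure_eventuallyEq (ha : 0 < a) (hb : 0 < b) :
    cgf Real.log (betaMeasure a b) =ᶠ[𝓝 0] fun u =>
      Real.log (Real.Gamma (a + b)) - Real.log (Real.Gamma a) +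
        (Real.log (Real.Gamma (a + u)) - Real.log (Real.Gamma (a + b + u))) :=
  (eventually_gt_nhds (neg_lt_zero.2 ha)).mono fun _ hu =>
    cgf_log_betaMeasure ha hb (neg_lt_iff_pos_add'.1 hu)

lemma memLp_log_betaMeasure (ha : 0 < a) (hb : 0 < b) (p : NNReal) :
    MemLp Real.log p (betaMeasure a b) :=
  memLp_of_mem_interior_integrableExpSet
    (zero_mem_interior_integrableExpSet_log_betaMeasure ha hb) p

lemma integral_log_betaMeasure (ha : 0 < a) (hb : 0 < b) :
    ∫ y, Real.log y ∂betaMeasure a b = digamma a - digamma (a + b) := by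
  have := isProbabilityMeasureBeta ha hb
  have hΓa := (hasDerivAt_log_Gamma (by simpa using ha)).comp_const_add a 0
  have hΓab := (hasDerivAt_log_Gamma (by simpa using add_pos ha hb)).comp_const_add (a + b) 0
  calc ∫ y, Real.log y ∂betaMeasure a b
    _ = deriv (cgf Real.log (betaMeasure a b)) 0 := by
      rw [deriv_cgf_zero (zero_mem_interior_integrableExpSet_log_betaMeasure ha hb),
        probReal_univ, div_one]
    _ = digamma (a + 0) - digamma (a + b + 0) := by
      rw [(cgf_log_betaMeasure_eventuallyEq ha hb).deriv_eq]
      exact ((hΓa.sub hΓab).const_add _).deriv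
    _ = digamma a - digamma (a + b) := by rw [add_zero, add_zero]

lemma variance_log_betaMeasure (ha : 0 < a) (hb : 0 < b) :
    Var[Real.log; betaMeasure a b] = trigamma a - trigamma (a + b) := by
  have := isProbabilityMeasureBeta ha hb
  have hΓ {c : ℝ} (hc : 0 < c) :
      ContDiffAt ℝ (2 : ℕ) (fun u => Real.log (Real.Gamma (c + u))) 0 :=
    AnalyticAt.contDiffAt <| AnalyticAt.fun_comp (f := fun u => c + u)
      (analyticAt_log_Gamma (by simpa using hc)) (by fun_prop)
  rw [← iteratedDeriv_two_cgf_zero (zero_mem_interior_integrableExpSet_log_betaMeasure ha hb),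
    (cgf_log_betaMeasure_eventuallyEq ha hb).iteratedDeriv_eq, iteratedDeriv_const_add two_pos,
    iteratedDeriv_fun_sub (hΓ ha) (hΓ (add_pos ha hb)),
    iteratedDeriv_comp_const_add (f := fun x => Real.log (Real.Gamma x)),
    iteratedDeriv_comp_const_add (f := fun x => Real.log (Real.Gamma x))]
  simp only [add_zero, trigamma]

lemma memLp_log_one_sub_betaMeasure (ha : 0 < a) (hb : 0 < b) (p : NNReal) :
    MemLp (fun y => Real.log (1 - y)) p (betaMeasure a b) :=
  (memLp_log_betaMeasure hb ha p).comp_measurePreserving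
    (measurePreserving_one_sub_betaMeasure a b)

lemma integral_log_one_sub_betaMeasure (ha : 0 < a) (hb : 0 < b) :
    ∫ y, Real.log (1 - y) ∂betaMeasure a b = digamma b - digamma (a + b) := by
  rw [(measurePreserving_one_sub_betaMeasure a b).integral_comp
    (MeasurableEquiv.subLeft (1 : ℝ)).measurableEmbedding, integral_log_betaMeasure hb ha,
    add_comm b]

lemma variance_log_one_sub_betaMeasure (ha : 0 < a) (hb : 0 < b) :
    Var[fun y => Real.log (1 - y); betaMeasure a b] = trigamma b - trigamma (a + b) := by
  rw [(measurePreserving_one_sub_betaMeasure a b).variance_fun_comp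
    Real.measurable_log.aemeasurable, variance_log_betaMeasure hb ha, add_comm b]

lemma covariance_log_add_log_sub_betaMeasure (ha : 0 < a) (hb : 0 < b) :
    cov[fun y => Real.log y + Real.log (1 - y), fun y => Real.log y - Real.log (1 - y);
      betaMeasure a b] = trigamma a - trigamma b := by
  have := isProbabilityMeasureBeta ha hb
  have hcov := covariance_add_sub (memLp_log_betaMeasure ha hb 2)
    (memLp_log_one_sub_betaMeasure ha hb 2)
  rw [variance_log_betaMeasure ha hb, variance_log_one_sub_betaMeasure ha hb] at hcov
  exact hcov.trans (sub_sub_sub_cancel_right _ _ _)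

end BetaDistribution

section Sigmoid

lemma integral_Ioo_zero_one_eq_integral_sigmoid {E : Type*} [NormedAddCommGroup E]
    [NormedSpace ℝ E] (g : ℝ → E) :
    ∫ y in Ioo 0 1, g y =
      ∫ x, (Real.sigmoid x * (1 - Real.sigmoid x)) • g (Real.sigmoid x) := by
  rw [← Real.range_sigmoid, ← image_univ, integral_image_eq_integral_abs_deriv_smul .univ
    (fun x _ => (Real.hasDerivAt_sigmoid x).hasDerivWithinAt) Real.sigmoid_injective.injOn,
    setIntegral_univ]
  congr with x
  rw [abs_of_pos (mul_pos (Real.sigmoid_pos x) (sub_pos.2 (Real.sigmoid_lt_one x)))]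

lemma sech_pos (x : ℝ) : 0 < sech x := one_div_pos.2 (Real.cosh_pos x)

lemma sech_neg (x : ℝ) : sech (-x) = sech x := by rw [sech, sech, Real.cosh_neg]

lemma sigmoid_two_mul (x : ℝ) : Real.sigmoid (2 * x) = sech x / 2 * Real.exp x := by
  have hexp : Real.exp (-(2 * x)) = Real.exp (-x) / Real.exp x := by
    rw [← Real.exp_sub]
    ring_nf
  rw [Real.sigmoid_def, sech, Real.cosh_eq, hexp]
  field_simp

lemma one_sub_sigmoid_two_mul (x : ℝ) :
    1 - Real.sigmoid (2 * x) = sech x / 2 * Real.exp (-x) := by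
  rw [← Real.sigmoid_neg, ← sech_neg, ← sigmoid_two_mul, mul_neg]

lemma log_sigmoid_two_mul (x : ℝ) :
    Real.log (Real.sigmoid (2 * x)) = Real.log (sech x) + x - Real.log 2 := by
  have hs := sech_pos x
  rw [sigmoid_two_mul, Real.log_mul (half_pos hs).ne' (Real.exp_ne_zero x),
    Real.log_div hs.ne' two_ne_zero, Real.log_exp, sub_add_eq_add_sub]

lemma log_one_sub_sigmoid_two_mul (x : ℝ) :
    Real.log (1 - Real.sigmoid (2 * x)) = Real.log (sech x) - x - Real.log 2 := by
  rw [← Real.sigmoid_neg, ← mul_neg, log_sigmoid_two_mul, sech_neg, ← sub_eq_add_neg]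

lemma sigmoid_two_mul_rpow_mul_one_sub_rpow (a b x : ℝ) :
    Real.sigmoid (2 * x) ^ a * (1 - Real.sigmoid (2 * x)) ^ b =
      (sech x / 2) ^ (a + b) * Real.exp ((a - b) * x) := by
  have hs : 0 < sech x / 2 := half_pos (sech_pos x)
  rw [one_sub_sigmoid_two_mul, sigmoid_two_mul, Real.mul_rpow hs.le (Real.exp_nonneg _),
    Real.mul_rpow hs.le (Real.exp_nonneg _), ← Real.exp_mul, ← Real.exp_mul, mul_mul_mul_comm,
    ← Real.rpow_add hs, ← Real.exp_add]
  ring_nf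

lemma betaLogisticPDF_eq_betaPDFReal_sigmoid (θ1 θ2 x : ℝ) :
    betaLogisticPDF θ1 θ2 x =
      2 * (Real.sigmoid (2 * x) * (1 - Real.sigmoid (2 * x)) *
        betaPDFReal ((θ1 + θ2) / 2) ((θ1 - θ2) / 2) (Real.sigmoid (2 * x))) := by
  have hp := Real.sigmoid_pos (2 * x)
  have hq := sub_pos.2 (Real.sigmoid_lt_one (2 * x))
  have hsum : (θ1 + θ2) / 2 + (θ1 - θ2) / 2 = θ1 := by ring
  have hdiff : (θ1 + θ2) / 2 - (θ1 - θ2) / 2 = θ2 := by ring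
  have hpow := sigmoid_two_mul_rpow_mul_one_sub_rpow ((θ1 + θ2) / 2) ((θ1 - θ2) / 2) x
  rw [hsum, hdiff, Real.div_rpow (sech_pos x).le two_pos.le] at hpow
  calc betaLogisticPDF θ1 θ2 x
    _ = 2 * (sech x ^ θ1 / 2 ^ θ1 * Real.exp (θ2 * x)) /
        beta ((θ1 + θ2) / 2) ((θ1 - θ2) / 2) := by
      rw [betaLogisticPDF, beta, hsum, Real.rpow_sub two_pos, Real.rpow_one]
      ring
    _ = _ := by
      rw [← hpow, betaPDFReal, if_pos ⟨hp, Real.sigmoid_lt_one _⟩, Real.rpow_sub_one hp.ne',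
        Real.rpow_sub_one hq.ne']
      field_simp

lemma integral_comp_sigmoid_two_mul_betaLogisticPDF {θ1 θ2 : ℝ} (h1 : 0 < θ1 + θ2)
    (h2 : 0 < θ1 - θ2) (g : ℝ → ℝ) :
    ∫ x, g (Real.sigmoid (2 * x)) * betaLogisticPDF θ1 θ2 x =
      ∫ y, g y ∂betaMeasure ((θ1 + θ2) / 2) ((θ1 - θ2) / 2) := by
  set f : ℝ → ℝ := fun y => betaPDFReal ((θ1 + θ2) / 2) ((θ1 - θ2) / 2) y * g y with hf
  have hf_zero (y : ℝ) (hy : y ∉ Ioo 0 1) : f y = 0 :=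
    mul_eq_zero_of_left (if_neg hy) _
  calc ∫ x, g (Real.sigmoid (2 * x)) * betaLogisticPDF θ1 θ2 x
    _ = ∫ x, 2 * (Real.sigmoid (2 * x) * (1 - Real.sigmoid (2 * x)) *
        f (Real.sigmoid (2 * x))) := by
      congr with x
      rw [betaLogisticPDF_eq_betaPDFReal_sigmoid, hf]
      ring
    _ = ∫ x, Real.sigmoid x * (1 - Real.sigmoid x) * f (Real.sigmoid x) := by
      rw [integral_const_mul, Measure.integral_comp_mul_left
        (fun x => Real.sigmoid x * (1 - Real.sigmoid x) * f (Real.sigmoid x)),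
        abs_of_pos (inv_pos.2 two_pos), smul_eq_mul, mul_inv_cancel_left₀ two_ne_zero]
    _ = ∫ y, f y := by
      rw [← setIntegral_eq_integral_of_forall_compl_eq_zero hf_zero,
        integral_Ioo_zero_one_eq_integral_sigmoid]
      rfl
    _ = ∫ y, g y ∂betaMeasure ((θ1 + θ2) / 2) ((θ1 - θ2) / 2) :=
      (integral_betaMeasure (half_pos h1) (half_pos h2) g).symm

end Sigmoid

/-- The covariance of `log(sech X)` and `X` under the beta-logistic distribution is
`(1/4)(ψ'((θ¹+θ²)/2) − ψ'((θ¹−θ²)/2))`.  This is the Fisher metric entry `g₁₂`. -/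
theorem betaLogistic_covariance (θ1 θ2 μ m : ℝ) (h1 : 0 < θ1 + θ2) (h2 : 0 < θ1 - θ2)
    (hμ : μ = (1 / 2) * (digamma ((θ1 + θ2) / 2) - digamma ((θ1 - θ2) / 2)))
    (hm : m = (1 / 2) * digamma ((θ1 - θ2) / 2) + (1 / 2) * digamma ((θ1 + θ2) / 2) -
      digamma θ1 + Real.log 2) :
    (∫ x : ℝ, (Real.log (sech x) - m) * (x - μ) * betaLogisticPDF θ1 θ2 x) =
      (1 / 4) * (trigamma ((θ1 + θ2) / 2) - trigamma ((θ1 - θ2) / 2)) := by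
  have ha := half_pos h1
  have hb := half_pos h2
  set a := (θ1 + θ2) / 2
  set b := (θ1 - θ2) / 2
  have := isProbabilityMeasureBeta ha hb
  have hab : a + b = θ1 := by ring
  have hlog : Integrable Real.log (betaMeasure a b) :=
    (memLp_log_betaMeasure ha hb 1).integrable le_rfl
  have hlog' : Integrable (fun y => Real.log (1 - y)) (betaMeasure a b) :=
    (memLp_log_one_sub_betaMeasure ha hb 1).integrable le_rfl
  rw [← covariance_log_add_log_sub_betaMeasure ha hb, covariance, integral_add hlog hlog',
    integral_sub hlog hlog', integral_log_betaMeasure ha hb, integral_log_one_sub_betaMeasure ha hb,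
    hab, ← integral_const_mul, ← integral_comp_sigmoid_two_mul_betaLogisticPDF h1 h2]
  congr with x
  rw [log_sigmoid_two_mul, log_one_sub_sigmoid_two_mul, hm, hμ]
  ring
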